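/- Let ℓ₀ > 0 and ℓ ≥ 3 be integers, and let p = p(n) be a function with p = ω(p_{ℓ₀,ℓ}(n)), where p_{ℓ₀,ℓ}(n) = n^{-(ℓ-1)/ℓ} if ℓ < ℓ₀ and p_{ℓ₀,ℓ}(n) = n^{-1} if ℓ ≥ ℓ₀. Then asymptotically almost surely the random graph G(n,p) is an (n, p, ℓ₀, ℓ)-graph. -/

import Mathlib

open Filter Finset SimpleGraph
open scoped Classical

/-- The probability, in the binomial random graph `G(n,p)`, of the event `A`. -/
noncomputable def erProb (n : ℕ) (p : ℝ) (A : SimpleGraph (Fin n) → Prop) : ℝ :=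
  ∑' G : SimpleGraph (Fin n),
    if A G then p ^ G.edgeSet.ncard * (1 - p) ^ (n.choose 2 - G.edgeSet.ncard) else 0

/-- The number of edges of `G` between two (disjoint) sets `V₁`, `V₂`. -/
noncomputable def edgesBetween {n : ℕ} (G : SimpleGraph (Fin n))
    (V₁ V₂ : Finset (Fin n)) : ℕ :=
  ((V₁ ×ˢ V₂).filter fun e => G.Adj e.1 e.2).card

/-- The number of cherries (copies of `K_{1,2}`) of `G` with centre in `V₁`, one leaf in
`V₂` and the other leaf in `V₃`. -/
noncomputable def cherriesBetween {n : ℕ} (G : SimpleGraph (Fin n))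
    (V₁ V₂ V₃ : Finset (Fin n)) : ℕ :=
  ((V₁ ×ˢ V₂ ×ˢ V₃).filter fun e => G.Adj e.1 e.2.1 ∧ G.Adj e.1 e.2.2).card

/-- The total number of cherries (copies of `K_{1,2}`) in `G`. -/
noncomputable def cherryCount {n : ℕ} (G : SimpleGraph (Fin n)) : ℕ :=
  (Finset.univ.filter fun e : Fin n × Fin n × Fin n =>
    G.Adj e.1 e.2.1 ∧ G.Adj e.1 e.2.2 ∧ e.2.1 < e.2.2).card

/-- The total number of triangles (copies of `C₃`) in `G`. -/
noncomputable def triangleCount {n : ℕ} (G : SimpleGraph (Fin n)) : ℕ :=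
  (Finset.univ.filter fun e : Fin n × Fin n × Fin n =>
    e.1 < e.2.1 ∧ e.2.1 < e.2.2 ∧ G.Adj e.1 e.2.1 ∧ G.Adj e.1 e.2.2 ∧ G.Adj e.2.1 e.2.2).card

/-- The total number of copies of the four-cycle `C₄` in `G` (each copy `a b c d` counted
once, normalised so that `a` is the smallest vertex and `b < d`). -/
noncomputable def c4Count {n : ℕ} (G : SimpleGraph (Fin n)) : ℕ :=
  (Finset.univ.filter fun e : Fin n × Fin n × Fin n × Fin n =>
    G.Adj e.1 e.2.1 ∧ G.Adj e.2.1 e.2.2.1 ∧ G.Adj e.2.2.1 e.2.2.2 ∧ G.Adj e.2.2.2 e.1 ∧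
    e.1 < e.2.1 ∧ e.1 < e.2.2.1 ∧ e.1 < e.2.2.2 ∧ e.2.1 < e.2.2.2).card

/-- The number of copies of the cycle `C_k` in `G` whose `i`-th vertex (in cyclic order)
lies in `V i`. -/
noncomputable def cyclesBetween {n : ℕ} (G : SimpleGraph (Fin n)) (k : ℕ)
    (V : Fin k → Finset (Fin n)) : ℕ :=
  (Finset.univ.filter fun v : Fin k → Fin n =>
    (∀ i, v i ∈ V i) ∧ ∀ i : Fin k, G.Adj (v i) (v (i + ⟨1 % k, Nat.mod_lt 1 i.pos⟩))).card

/-- `G` is an `(n, p, ℓ₀, ℓ)`-graph: conditions (A1), (A2) and (A3). -/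
def IsABGraph (n : ℕ) (p : ℝ) (ℓ₀ ℓ : ℕ) (G : SimpleGraph (Fin n)) : Prop :=
  -- (A1)
  (∀ V₁ V₂ : Finset (Fin n), Disjoint V₁ V₂ →
      (n : ℝ) / ℓ₀ ≤ (V₁.card : ℝ) → (n : ℝ) / ℓ₀ ≤ (V₂.card : ℝ) →
      p / 2 * V₁.card * V₂.card ≤ (edgesBetween G V₁ V₂ : ℝ)) ∧
  -- (A2)
  ((∀ V₁ V₂ V₃ : Finset (Fin n), Disjoint V₁ V₂ → Disjoint V₁ V₃ → Disjoint V₂ V₃ →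
      (n : ℝ) / ℓ₀ ≤ (V₁.card : ℝ) → (n : ℝ) / ℓ₀ ≤ (V₂.card : ℝ) →
      (n : ℝ) / ℓ₀ ≤ (V₃.card : ℝ) →
      p ^ 2 / 4 * V₁.card * V₂.card * V₃.card ≤ (cherriesBetween G V₁ V₂ V₃ : ℝ)) ∧
    (cherryCount G : ℝ) ≤ p ^ 2 * (n : ℝ) ^ 3) ∧
  -- (A3)
  ((∀ k : ℕ, ℓ ≤ k → k < ℓ₀ → ∀ V : Fin k → Finset (Fin n),
      (∀ i j, i ≠ j → Disjoint (V i) (V j)) →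
      (∀ i, (n : ℝ) / (ℓ₀ : ℝ) ^ 2 ≤ ((V i).card : ℝ)) →
      1 / 2 * p ^ k * ∏ i, ((V i).card : ℝ) ≤ (cyclesBetween G k V : ℝ)) ∧
    (triangleCount G : ℝ) ≤ p ^ 3 * (n : ℝ) ^ 3 ∧
    (c4Count G : ℝ) ≤ p ^ 4 * (n : ℝ) ^ 4)

/-- The critical probability `p_{ℓ₀,ℓ}(n)`. -/
noncomputable def pCrit (ℓ₀ ℓ : ℕ) (n : ℕ) : ℝ :=
  if ℓ < ℓ₀ then (n : ℝ) ^ (-(((ℓ : ℝ) - 1) / (ℓ : ℝ))) else (n : ℝ)⁻¹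

/-! Part 1 : finite product Bernoulli measure, Janson, Chebyshev. -/

set_option linter.unusedSectionVars false
set_option linter.unusedVariables false

section Generic
variable {α : Type*} [Fintype α] [DecidableEq α]

noncomputable def wt (p : ℝ) (S : Finset α) : ℝ :=
  p ^ S.card * (1 - p) ^ (Fintype.card α - S.card)

noncomputable def Ex (p : ℝ) (f : Finset α → ℝ) : ℝ := ∑ S, wt p S * f S

/-- indicator of inclusion -/
noncomputable def Ind (A S : Finset α) : ℝ := if A ⊆ S then 1 else 0

lemma wt_nonneg {p : ℝ} (h0 : 0 ≤ p) (h1 : p ≤ 1) (S : Finset α) : 0 ≤ wt p S := by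
  have : 0 ≤ 1 - p := by linarith
  unfold wt; positivity

lemma Ex_one (p : ℝ) : Ex (α := α) p (fun _ => 1) = 1 := by
  have := Fintype.sum_pow_mul_eq_add_pow α p (1 - p)
  simp only [Ex, wt, mul_one]
  rw [this]; simp

lemma Ex_mono {p : ℝ} (h0 : 0 ≤ p) (h1 : p ≤ 1) {f g : Finset α → ℝ} (h : ∀ S, f S ≤ g S) :
    Ex p f ≤ Ex p g :=
  Finset.sum_le_sum fun S _ => mul_le_mul_of_nonneg_left (h S) (wt_nonneg h0 h1 S)

lemma Ex_nonneg {p : ℝ} (h0 : 0 ≤ p) (h1 : p ≤ 1) {f : Finset α → ℝ} (h : ∀ S, 0 ≤ f S) :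
    0 ≤ Ex p f :=
  Finset.sum_nonneg fun S _ => mul_nonneg (wt_nonneg h0 h1 S) (h S)

lemma Ex_add (p : ℝ) (f g : Finset α → ℝ) : Ex p (fun S => f S + g S) = Ex p f + Ex p g := by
  simp [Ex, mul_add, Finset.sum_add_distrib]

lemma Ex_sub (p : ℝ) (f g : Finset α → ℝ) : Ex p (fun S => f S - g S) = Ex p f - Ex p g := by
  simp [Ex, mul_sub, Finset.sum_sub_distrib]

lemma Ex_const_mul (p c : ℝ) (f : Finset α → ℝ) : Ex p (fun S => c * f S) = c * Ex p f := by
  simp only [Ex, Finset.mul_sum]; exact Finset.sum_congr rfl fun S _ => by ring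

lemma Ex_sum {ι : Type*} (p : ℝ) (F : Finset ι) (f : ι → Finset α → ℝ) :
    Ex p (fun S => ∑ i ∈ F, f i S) = ∑ i ∈ F, Ex p (f i) := by
  simp only [Ex, Finset.mul_sum]; rw [Finset.sum_comm]

lemma wt_insert (p : ℝ) {a : α} {S : Finset α} (h : a ∉ S) :
    (1 - p) * wt p (insert a S) = p * wt p S := by
  have hc : S.card + 1 ≤ Fintype.card α := by
    rw [← Finset.card_insert_of_notMem h]; exact Finset.card_le_univ _
  obtain ⟨d, hd⟩ := Nat.exists_eq_add_of_le hc
  unfold wt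
  rw [Finset.card_insert_of_notMem h, hd]
  rw [show S.card + 1 + d - (S.card + 1) = d by omega,
    show S.card + 1 + d - S.card = d + 1 by omega]
  ring

lemma Ex_single (p : ℝ) (a : α) (h : Finset α → ℝ) (hh : ∀ S, h (insert a S) = h S) :
    Ex p (fun S => (if a ∈ S then 1 else 0) * h S) = p * Ex p h := by
  have key : (1 - p) * Ex p (fun S => (if a ∈ S then 1 else 0) * h S)
      = p * Ex p (fun S => (if a ∉ S then 1 else 0) * h S) := by
    have e1 : Ex p (fun S => (if a ∈ S then 1 else 0) * h S) =
        ∑ S ∈ univ.filter (fun S : Finset α => a ∈ S), wt p S * h S := by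
      rw [Finset.sum_filter]
      exact Finset.sum_congr rfl fun S _ => by by_cases haS : a ∈ S <;> simp [haS]
    have e2 : Ex p (fun S => (if a ∉ S then 1 else 0) * h S) =
        ∑ S ∈ univ.filter (fun S : Finset α => a ∉ S), wt p S * h S := by
      rw [Finset.sum_filter]
      exact Finset.sum_congr rfl fun S _ => by by_cases haS : a ∈ S <;> simp [haS]
    rw [e1, e2, Finset.mul_sum, Finset.mul_sum]
    symm
    refine Finset.sum_bij' (fun S _ => insert a S) (fun S _ => S.erase a) ?_ ?_ ?_ ?_ ?_
    · intro S hS; simp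
    · intro S hS; simp
    · intro S hS; simp at hS; simp [hS]
    · intro S hS; simp at hS; simp [hS]
    · intro S hS
      simp at hS
      rw [hh, ← mul_assoc, ← mul_assoc, wt_insert p hS]
  have tot : Ex p h = Ex p (fun S => (if a ∈ S then 1 else 0) * h S)
      + Ex p (fun S => (if a ∉ S then 1 else 0) * h S) := by
    rw [← Ex_add]
    refine Finset.sum_congr rfl fun S _ => ?_
    by_cases haS : a ∈ S <;> simp [haS]
  rw [tot]; linarith

lemma Ex_ind (p : ℝ) (A : Finset α) (h : Finset α → ℝ) (hh : ∀ a ∈ A, ∀ S, h (insert a S) = h S) :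
    Ex p (fun S => Ind A S * h S) = p ^ A.card * Ex p h := by
  induction A using Finset.induction_on with
  | empty => simp [Ind]
  | insert a A ha ih =>
    have ih' := ih (fun b hb => hh b (Finset.mem_insert_of_mem hb))
    rw [Finset.card_insert_of_notMem ha, pow_succ', mul_assoc, ← ih', ← Ex_single p a]
    · refine Finset.sum_congr rfl fun S _ => ?_
      unfold Ind
      by_cases h1 : a ∈ S <;> by_cases h2 : A ⊆ S <;> simp [h1, h2, Finset.insert_subset_iff]
    · intro S
      rw [hh a (Finset.mem_insert_self _ _)]
      unfold Ind
      simp only [Finset.subset_insert_iff_of_notMem ha]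

lemma Ex_Ind (p : ℝ) (A : Finset α) : Ex p (Ind A) = p ^ A.card := by
  have := Ex_ind p A (fun _ => 1) (fun _ _ _ => rfl)
  rw [Ex_one] at this
  simpa using this

lemma Ind_mul (A B S : Finset α) : Ind A S * Ind B S = Ind (A ∪ B) S := by
  unfold Ind
  by_cases h1 : A ⊆ S <;> by_cases h2 : B ⊆ S <;> simp [h1, h2, Finset.union_subset_iff]

lemma Ind_nonneg (A S : Finset α) : 0 ≤ Ind A S := by unfold Ind; split_ifs <;> norm_num

lemma Ind_mono (A : Finset α) : Monotone (Ind A) := by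
  intro S T h
  unfold Ind
  split_ifs with h1 h2 h2
  · exact le_rfl
  · exact absurd (h1.trans h) h2
  · norm_num
  · exact le_rfl

lemma wt_mul (p : ℝ) (S T : Finset α) : wt p S * wt p T = wt p (S ⊓ T) * wt p (S ⊔ T) := by
  have hc : (S ∩ T).card + (S ∪ T).card = S.card + T.card := by
    rw [add_comm]; exact Finset.card_union_add_card_inter S T
  have h1 := Finset.card_le_univ S
  have h2 := Finset.card_le_univ T
  have h3 := Finset.card_le_univ (S ∩ T)
  have h4 := Finset.card_le_univ (S ∪ T)
  unfold wt
  rw [Finset.inf_eq_inter, Finset.sup_eq_union]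
  rw [mul_mul_mul_comm, ← pow_add, ← pow_add, mul_mul_mul_comm (p ^ (S ∩ T).card), ← pow_add,
    ← pow_add, hc]
  congr 2
  omega

lemma fkg_anti {p : ℝ} (h0 : 0 ≤ p) (h1 : p ≤ 1) (A : Finset α) (f g : Finset α → ℝ)
    (hf1 : ∀ S, f S ≤ 1) (hg1 : ∀ S, g S ≤ 1) (hf : Antitone f) (hg : Antitone g) :
    Ex p (fun S => Ind A S * f S) * Ex p (fun S => Ind A S * g S) ≤
      p ^ A.card * Ex p (fun S => Ind A S * (f S * g S)) := by
  have := fkg (μ := fun S : Finset α => wt p S * Ind A S) (f := fun S => 1 - f S)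
    (g := fun S => 1 - g S)
    (fun S => mul_nonneg (wt_nonneg h0 h1 S) (Ind_nonneg A S))
    (fun S => sub_nonneg.2 (hf1 S)) (fun S => sub_nonneg.2 (hg1 S))
    (fun S T h => sub_le_sub_left (hf h) _) (fun S T h => sub_le_sub_left (hg h) _)
    (by
      intro S T
      have hI : Ind A S * Ind A T = Ind A (S ⊓ T) * Ind A (S ⊔ T) := by
        unfold Ind
        by_cases h1 : A ⊆ S <;> by_cases h2 : A ⊆ T <;>
          simp [h1, h2, Finset.subset_inter_iff]
        exact h1.trans Finset.subset_union_left
      have : wt p S * Ind A S * (wt p T * Ind A T) =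
        wt p (S ⊓ T) * Ind A (S ⊓ T) * (wt p (S ⊔ T) * Ind A (S ⊔ T)) := by
        rw [mul_mul_mul_comm, wt_mul, hI, mul_mul_mul_comm]
      exact this.le)
  have e0 : ∑ S : Finset α, wt p S * Ind A S = p ^ A.card := Ex_Ind p A
  have e1 : ∀ u : Finset α → ℝ, ∑ S : Finset α, wt p S * Ind A S * u S
      = Ex p (fun S => Ind A S * u S) := by
    intro u; exact Finset.sum_congr rfl fun S _ => by ring
  rw [e0, e1, e1, e1] at this
  have l1 : ∀ u : Finset α → ℝ, Ex p (fun S => Ind A S * (1 - u S))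
      = p ^ A.card - Ex p (fun S => Ind A S * u S) := by
    intro u
    rw [← Ex_Ind p A, ← Ex_sub]
    exact Finset.sum_congr rfl fun S _ => by ring
  have l2 : Ex p (fun S => Ind A S * ((1 - f S) * (1 - g S))) =
      p ^ A.card - Ex p (fun S => Ind A S * f S) - Ex p (fun S => Ind A S * g S)
        + Ex p (fun S => Ind A S * (f S * g S)) := by
    rw [← Ex_Ind p A, ← Ex_sub, ← Ex_sub, ← Ex_add]
    exact Finset.sum_congr rfl fun S _ => by ring
  rw [l1, l1, l2] at this
  nlinarith

variable {ι : Type*}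

noncomputable def XX (F : Finset ι) (A : ι → Finset α) (S : Finset α) : ℝ := ∑ i ∈ F, Ind (A i) S

noncomputable def Mu (p : ℝ) (F : Finset ι) (A : ι → Finset α) : ℝ := ∑ i ∈ F, p ^ (A i).card

noncomputable def Del (p : ℝ) (F : Finset ι) (A : ι → Finset α) : ℝ :=
  ∑ i ∈ F, ∑ j ∈ F.filter (fun j => ¬ Disjoint (A i) (A j)), p ^ (A i ∪ A j).card

lemma XX_nonneg (F : Finset ι) (A : ι → Finset α) (S : Finset α) : 0 ≤ XX F A S :=
  Finset.sum_nonneg fun i _ => Ind_nonneg _ _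

lemma XX_mono (F : Finset ι) (A : ι → Finset α) : Monotone (XX F A) :=
  fun _ _ h => Finset.sum_le_sum fun i _ => Ind_mono (A i) h

lemma janson_step {p : ℝ} (h0 : 0 < p) (h1 : p ≤ 1) (F : Finset ι) (A : ι → Finset α)
    {s : ℝ} (hs : 0 ≤ s) (i : ι) :
    (p ^ (A i).card - s * ∑ j ∈ F.filter (fun j => ¬ Disjoint (A i) (A j)), p ^ (A i ∪ A j).card)
      * Ex p (fun S => Real.exp (-(s * XX F A S)))
    ≤ Ex p (fun S => Ind (A i) S * Real.exp (-(s * XX F A S))) := by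
  set F1 := F.filter (fun j => ¬ Disjoint (A i) (A j)) with hF1
  set F2 := F.filter (fun j => ¬ ¬ Disjoint (A i) (A j)) with hF2
  have hX : ∀ S, XX F A S = XX F1 A S + XX F2 A S := fun S =>
    (Finset.sum_filter_add_sum_filter_not F _ _).symm
  have hanti : ∀ F' : Finset ι, Antitone (fun S => Real.exp (-(s * XX F' A S))) := by
    intro F' S T h
    apply Real.exp_le_exp.2
    have := mul_le_mul_of_nonneg_left (XX_mono F' A h) hs
    linarith
  have hle : ∀ F' : Finset ι, ∀ S, Real.exp (-(s * XX F' A S)) ≤ 1 := by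
    intro F' S
    rw [Real.exp_le_one_iff]
    have := mul_nonneg hs (XX_nonneg F' A S)
    linarith
  have hk := fkg_anti h0.le h1 (A i) _ _ (hle F1) (hle F2) (hanti F1) (hanti F2)
  have e1 : (fun S => Ind (A i) S * (Real.exp (-(s * XX F1 A S)) * Real.exp (-(s * XX F2 A S))))
      = fun S => Ind (A i) S * Real.exp (-(s * XX F A S)) := by
    funext S
    rw [← Real.exp_add, hX S]; congr 2; ring
  have e2 : Ex p (fun S => Ind (A i) S * Real.exp (-(s * XX F2 A S))) =
      p ^ (A i).card * Ex p (fun S => Real.exp (-(s * XX F2 A S))) := by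
    apply Ex_ind
    intro a ha S
    have : XX F2 A (insert a S) = XX F2 A S := by
      refine Finset.sum_congr rfl fun j hj => ?_
      have hd : Disjoint (A i) (A j) := by
        have := (Finset.mem_filter.1 hj).2
        exact not_not.1 this
      have haj : a ∉ A j := Finset.disjoint_left.1 hd ha
      unfold Ind
      simp only [Finset.subset_insert_iff_of_notMem haj]
    rw [this]
  rw [e1, e2] at hk
  have hpa : 0 < p ^ (A i).card := by positivity
  have hk2 : Ex p (fun S => Ind (A i) S * Real.exp (-(s * XX F1 A S))) *
      Ex p (fun S => Real.exp (-(s * XX F2 A S))) ≤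
      Ex p (fun S => Ind (A i) S * Real.exp (-(s * XX F A S))) := by
    nlinarith
  have hk3 : Ex p (fun S => Real.exp (-(s * XX F A S))) ≤
      Ex p (fun S => Real.exp (-(s * XX F2 A S))) := by
    apply Ex_mono h0.le h1
    intro S
    apply Real.exp_le_exp.2
    have := mul_nonneg hs (XX_nonneg F1 A S)
    rw [hX S]; linarith
  have hk4 : (p ^ (A i).card - s * ∑ j ∈ F1, p ^ (A i ∪ A j).card) ≤
      Ex p (fun S => Ind (A i) S * Real.exp (-(s * XX F1 A S))) := by
    have : (p ^ (A i).card - s * ∑ j ∈ F1, p ^ (A i ∪ A j).card) =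
        Ex p (fun S => Ind (A i) S - s * ∑ j ∈ F1, Ind (A i ∪ A j) S) := by
      rw [Ex_sub, Ex_const_mul, Ex_sum, Ex_Ind]
      simp only [Ex_Ind]
    rw [this]
    apply Ex_mono h0.le h1
    intro S
    have h2 : ∑ j ∈ F1, Ind (A i ∪ A j) S = Ind (A i) S * XX F1 A S := by
      unfold XX
      rw [Finset.mul_sum]
      exact Finset.sum_congr rfl fun j _ => (Ind_mul _ _ _).symm
    rw [h2]
    have h3 := Real.add_one_le_exp (-(s * XX F1 A S))
    have := mul_le_mul_of_nonneg_left h3 (Ind_nonneg (A i) S)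
    linarith
  have hpsi : 0 ≤ Ex p (fun S => Real.exp (-(s * XX F A S))) :=
    Ex_nonneg h0.le h1 fun S => (Real.exp_pos _).le
  have hq : 0 ≤ Ex p (fun S => Ind (A i) S * Real.exp (-(s * XX F1 A S))) :=
    Ex_nonneg h0.le h1 fun S => mul_nonneg (Ind_nonneg _ _) (Real.exp_pos _).le
  calc _ ≤ Ex p (fun S => Ind (A i) S * Real.exp (-(s * XX F1 A S))) *
        Ex p (fun S => Real.exp (-(s * XX F A S))) := mul_le_mul_of_nonneg_right hk4 hpsi
    _ ≤ Ex p (fun S => Ind (A i) S * Real.exp (-(s * XX F1 A S))) *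
        Ex p (fun S => Real.exp (-(s * XX F2 A S))) := mul_le_mul_of_nonneg_left hk3 hq
    _ ≤ _ := hk2

lemma janson_sum {p : ℝ} (h0 : 0 < p) (h1 : p ≤ 1) (F : Finset ι) (A : ι → Finset α)
    {s : ℝ} (hs : 0 ≤ s) :
    (Mu p F A - s * Del p F A) * Ex p (fun S => Real.exp (-(s * XX F A S)))
    ≤ Ex p (fun S => XX F A S * Real.exp (-(s * XX F A S))) := by
  have e : Ex p (fun S => XX F A S * Real.exp (-(s * XX F A S))) =
      ∑ i ∈ F, Ex p (fun S => Ind (A i) S * Real.exp (-(s * XX F A S))) := by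
    rw [← Ex_sum]
    congr 1; funext S
    rw [← Finset.sum_mul]; rfl
  rw [e]
  unfold Mu Del
  rw [Finset.mul_sum, ← Finset.sum_sub_distrib, Finset.sum_mul]
  exact Finset.sum_le_sum fun i _ => janson_step h0 h1 F A hs i

lemma janson_mgf {p : ℝ} (h0 : 0 < p) (h1 : p ≤ 1) (F : Finset ι) (A : ι → Finset α)
    {s : ℝ} (hs : 0 ≤ s) :
    Ex p (fun S => Real.exp (-(s * XX F A S))) ≤
      Real.exp (-(s * Mu p F A) + s ^ 2 * Del p F A / 2) := by
  set μ := Mu p F A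
  set D := Del p F A
  have hd : ∀ t : ℝ, HasDerivAt (fun t => Ex p (fun S => Real.exp (-(t * XX F A S))))
      (-Ex p (fun S => XX F A S * Real.exp (-(t * XX F A S)))) t := by
    intro t
    unfold Ex
    rw [← Finset.sum_neg_distrib]
    apply HasDerivAt.fun_sum
    intro S _
    have h := ((((hasDerivAt_id' t).mul_const (XX F A S)).fun_neg).exp).const_mul (wt p S)
    exact h.congr_deriv (by ring)
  have hg : ∀ t : ℝ, HasDerivAt (fun t => Real.exp (t * μ - t ^ 2 * D / 2))
      (Real.exp (t * μ - t ^ 2 * D / 2) * (μ - t * D)) t := by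
    intro t
    have h := (((hasDerivAt_id' t).mul_const μ).fun_sub
      (((hasDerivAt_pow 2 t).mul_const D).div_const 2)).exp
    exact h.congr_deriv (by push_cast; ring)
  have hphi := fun t => (hd t).mul (hg t)
  have hanti : AntitoneOn ((fun t => Ex p (fun S => Real.exp (-(t * XX F A S)))) *
      (fun t => Real.exp (t * μ - t ^ 2 * D / 2))) (Set.Ici 0) := by
    apply antitoneOn_of_deriv_nonpos (convex_Ici 0)
    · exact fun t _ => (hphi t).continuousAt.continuousWithinAt
    · exact fun t _ => (hphi t).differentiableAt.differentiableWithinAt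
    · intro t ht
      rw [(hphi t).deriv]
      rw [interior_Ici] at ht
      have := janson_sum h0 h1 F A (le_of_lt ht)
      have he := Real.exp_pos (t * μ - t ^ 2 * D / 2)
      have h3 := mul_le_mul_of_nonneg_left this he.le
      linarith
  have := hanti (Set.mem_Ici.2 le_rfl) (Set.mem_Ici.2 hs) hs
  simp only [Pi.mul_apply, zero_mul, neg_zero, Real.exp_zero, Ex_one] at this
  have he : Real.exp (-(s * μ) + s ^ 2 * D / 2) * Real.exp (s * μ - s ^ 2 * D / 2) = 1 := by
    rw [← Real.exp_add]; simp
  have hpos := Real.exp_pos (s * μ - s ^ 2 * D / 2)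
  refine le_of_mul_le_mul_right ?_ hpos
  rw [he]
  simpa using this

lemma janson {p : ℝ} (h0 : 0 < p) (h1 : p ≤ 1) (F : Finset ι) (A : ι → Finset α)
    (hD : 0 < Del p F A) (hM : 0 ≤ Mu p F A) :
    Ex p (fun S => if XX F A S < 1 / 2 * Mu p F A then 1 else 0) ≤
      Real.exp (-(Mu p F A ^ 2 / (8 * Del p F A))) := by
  set μ := Mu p F A
  set D := Del p F A
  set s := μ / (2 * D) with hs
  have hs0 : 0 ≤ s := by positivity
  calc _ ≤ Ex p (fun S => Real.exp (s * μ / 2) * Real.exp (-(s * XX F A S))) := by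
        apply Ex_mono h0.le h1
        intro S
        split_ifs with h
        · rw [← Real.exp_add]
          apply Real.one_le_exp
          nlinarith
        · positivity
    _ = Real.exp (s * μ / 2) * Ex p (fun S => Real.exp (-(s * XX F A S))) := Ex_const_mul _ _ _
    _ ≤ Real.exp (s * μ / 2) * Real.exp (-(s * μ) + s ^ 2 * D / 2) :=
        mul_le_mul_of_nonneg_left (janson_mgf h0 h1 F A hs0) (Real.exp_pos _).le
    _ = _ := by
        rw [← Real.exp_add]; congr 1
        rw [hs]; field_simp; ring

lemma chebyshev {p : ℝ} (h0 : 0 ≤ p) (h1 : p ≤ 1) (F : Finset ι) (A : ι → Finset α)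
    {t : ℝ} (ht : 0 < t) (hM : Mu p F A ≤ t) :
    Ex p (fun S => if 2 * t < XX F A S then 1 else 0) ≤ Del p F A / t ^ 2 := by
  set μ := Mu p F A with hμ
  have hEX : Ex p (XX F A) = μ := by
    unfold XX; rw [Ex_sum]; simp only [Ex_Ind]; rfl
  have hEX2 : Ex p (fun S => XX F A S ^ 2) = ∑ i ∈ F, ∑ j ∈ F, p ^ (A i ∪ A j).card := by
    have : (fun S => XX F A S ^ 2) = fun S => ∑ i ∈ F, ∑ j ∈ F, Ind (A i ∪ A j) S := by
      funext S
      unfold XX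
      rw [sq, Finset.sum_mul_sum]
      simp only [Ind_mul]
    rw [this, Ex_sum]
    refine Finset.sum_congr rfl fun i _ => ?_
    rw [Ex_sum]; simp only [Ex_Ind]
  have hvar : Ex p (fun S => (XX F A S - μ) ^ 2) ≤ Del p F A := by
    have e : Ex p (fun S => (XX F A S - μ) ^ 2) = Ex p (fun S => XX F A S ^ 2) - μ ^ 2 := by
      have : (fun S => (XX F A S - μ) ^ 2) =
          fun S => XX F A S ^ 2 - (2 * μ) * XX F A S + μ ^ 2 * 1 := by funext S; ring
      rw [this, Ex_add, Ex_sub, Ex_const_mul, Ex_const_mul, Ex_one, hEX]; ring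
    rw [e, hEX2]
    have e2 : μ ^ 2 = ∑ i ∈ F, ∑ j ∈ F, p ^ (A i).card * p ^ (A j).card := by
      rw [sq, hμ, Mu, Finset.sum_mul_sum]
    rw [e2, ← Finset.sum_sub_distrib]
    unfold Del
    refine Finset.sum_le_sum fun i _ => ?_
    rw [← Finset.sum_sub_distrib, Finset.sum_filter]
    refine Finset.sum_le_sum fun j _ => ?_
    by_cases h : Disjoint (A i) (A j)
    swap
    · have : 0 ≤ p ^ (A i).card * p ^ (A j).card := by positivity
      rw [if_pos h]
      linarith
    · rw [Finset.card_union_of_disjoint h, pow_add]; simp [h]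
  calc _ ≤ Ex p (fun S => (1 / t ^ 2) * (XX F A S - μ) ^ 2) := by
        apply Ex_mono h0 h1
        intro S
        split_ifs with h
        · rw [one_div, inv_mul_eq_div, le_div_iff₀ (by positivity), one_mul]
          apply pow_le_pow_left₀ ht.le
          linarith
        · positivity
    _ = (1 / t ^ 2) * Ex p (fun S => (XX F A S - μ) ^ 2) := Ex_const_mul _ _ _
    _ ≤ (1 / t ^ 2) * Del p F A := mul_le_mul_of_nonneg_left hvar (by positivity)
    _ = _ := by ring
end Generic

/-! Part 2 : patterns. -/

abbrev Edg (n : ℕ) := {e : Sym2 (Fin n) // ¬ e.IsDiag}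

def toG {n : ℕ} (S : Finset (Edg n)) : SimpleGraph (Fin n) :=
  SimpleGraph.fromEdgeSet (Subtype.val '' (S : Set (Edg n)))

lemma toG_edgeSet {n : ℕ} (S : Finset (Edg n)) :
    (toG S).edgeSet = Subtype.val '' (S : Set (Edg n)) := by
  unfold toG
  rw [SimpleGraph.edgeSet_fromEdgeSet]
  ext e
  simp only [Set.mem_sdiff, Set.mem_image]
  constructor
  · exact fun h => h.1
  · rintro ⟨a, ha, rfl⟩
    exact ⟨⟨a, ha, rfl⟩, fun h => a.2 (by simpa using h)⟩

lemma erProb_eq (n : ℕ) (p : ℝ) (P : SimpleGraph (Fin n) → Prop) :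
    erProb n p P = Ex (α := Edg n) p (fun S => if P (toG S) then 1 else 0) := by
  unfold erProb Ex
  rw [tsum_fintype]
  symm
  refine Finset.sum_bij (fun S _ => toG S) (fun _ _ => Finset.mem_univ _) ?_ ?_ ?_
  · intro S _ T _ h
    have : (toG S).edgeSet = (toG T).edgeSet := by rw [h]
    rw [toG_edgeSet, toG_edgeSet] at this
    exact Finset.coe_injective (Set.image_injective.2 Subtype.val_injective this)
  · intro G _
    refine ⟨univ.filter (fun e : Edg n => e.1 ∈ G.edgeSet), Finset.mem_univ _, ?_⟩
    apply SimpleGraph.edgeSet_injective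
    rw [toG_edgeSet]
    ext e
    simp only [Set.mem_image, Finset.coe_filter, Finset.mem_univ, true_and, Set.mem_ofPred_eq]
    constructor
    · rintro ⟨a, ha, rfl⟩; exact ha
    · intro he; exact ⟨⟨e, G.not_isDiag_of_mem_edgeSet he⟩, he, rfl⟩
  · intro S _
    have hc : (toG S).edgeSet.ncard = S.card := by
      rw [toG_edgeSet, Set.ncard_image_of_injective _ Subtype.val_injective, Set.ncard_coe_finset]
    have hn : Fintype.card (Edg n) = n.choose 2 := by
      have := Sym2.card_subtype_not_diag (α := Fin n)
      rw [Fintype.card_fin] at this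
      rw [← this]
    rw [hc]
    unfold wt
    rw [hn]
    by_cases h : P (toG S) <;> simp [h]

section Pattern
variable {κ : Type} [Fintype κ] [DecidableEq κ] {m n : ℕ}

noncomputable def emb (E : κ → Sym2 (Fin m)) (v : Fin m → Fin n) : Finset (Edg n) :=
  univ.filter (fun a => ∃ i, (E i).map v = a.1)

noncomputable def cntS (E : κ → Sym2 (Fin m)) (F : Finset (Fin m → Fin n))
    (G : SimpleGraph (Fin n)) : Finset (Fin m → Fin n) :=
  F.filter (fun v => ∀ i, (E i).map v ∈ G.edgeSet)

lemma mem_cntS {E : κ → Sym2 (Fin m)} {F : Finset (Fin m → Fin n)}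
    {G : SimpleGraph (Fin n)} {v : Fin m → Fin n} :
    v ∈ cntS E F G ↔ v ∈ F ∧ ∀ i, (E i).map v ∈ G.edgeSet := Finset.mem_filter

noncomputable def cnt (E : κ → Sym2 (Fin m)) (F : Finset (Fin m → Fin n))
    (G : SimpleGraph (Fin n)) : ℕ := (cntS E F G).card

def VJ (E : κ → Sym2 (Fin m)) (J : Finset κ) : Finset (Fin m) :=
  univ.filter (fun x => ∃ i ∈ J, x ∈ E i)

lemma map_nd {v : Fin m → Fin n} (hv : Function.Injective v) {e : Sym2 (Fin m)}
    (he : ¬ e.IsDiag) : ¬ (e.map v).IsDiag := by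
  induction e using Sym2.ind with
  | _ x y => 
    simp only [Sym2.map_mk, Sym2.mk_isDiag_iff] at he ⊢
    exact fun h => he (hv h)

lemma emb_inter_card (E : κ → Sym2 (Fin m)) (hE : Function.Injective E)
    (hd : ∀ i, ¬ (E i).IsDiag) {v w : Fin m → Fin n} (hw : Function.Injective w) :
    (emb E v ∩ emb E w).card = (univ.filter (fun i => ∃ j, (E j).map v = (E i).map w)).card := by
  symm
  refine Finset.card_bij (fun i _ => ⟨(E i).map w, map_nd hw (hd i)⟩) ?_ ?_ ?_
  · intro i hi
    simp only [Finset.mem_filter, Finset.mem_univ, true_and] at hi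
    simp only [emb, Finset.mem_inter, Finset.mem_filter, Finset.mem_univ, true_and]
    exact ⟨hi, i, rfl⟩
  · intro i _ j _ h
    have := congrArg Subtype.val h
    exact hE (Sym2.map.injective hw this)
  · intro a ha
    simp only [emb, Finset.mem_inter, Finset.mem_filter, Finset.mem_univ, true_and] at ha
    obtain ⟨⟨j, hj⟩, i, hi⟩ := ha
    refine ⟨i, ?_, Subtype.ext hi⟩
    simp only [Finset.mem_filter, Finset.mem_univ, true_and]
    exact ⟨j, hj.trans hi.symm⟩

lemma emb_card (E : κ → Sym2 (Fin m)) (hE : Function.Injective E)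
    (hd : ∀ i, ¬ (E i).IsDiag) {w : Fin m → Fin n} (hw : Function.Injective w) :
    (emb E w).card = Fintype.card κ := by
  have := emb_inter_card E hE hd (v := w) hw
  rw [Finset.inter_self] at this
  rw [this, ← Finset.card_univ]
  congr 1
  ext i; simp only [Finset.mem_filter, Finset.mem_univ, true_and, iff_true]
  exact ⟨i, rfl⟩

lemma XX_eq_cnt (E : κ → Sym2 (Fin m)) (hd : ∀ i, ¬ (E i).IsDiag)
    (F : Finset (Fin m → Fin n)) (hF : ∀ v ∈ F, Function.Injective v) (S : Finset (Edg n)) :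
    XX F (emb E) S = (cnt E F (toG S) : ℝ) := by
  unfold XX cnt cntS Ind
  rw [Finset.card_filter]
  push_cast
  refine Finset.sum_congr rfl fun v hv => ?_
  have : emb E v ⊆ S ↔ ∀ i, (E i).map v ∈ (toG S).edgeSet := by
    rw [toG_edgeSet]
    constructor
    · intro h i
      refine ⟨⟨(E i).map v, map_nd (hF v hv) (hd i)⟩, ?_, rfl⟩
      apply h
      simp only [emb, Finset.mem_filter, Finset.mem_univ, true_and]
      exact ⟨i, rfl⟩
    · intro h a ha
      simp only [emb, Finset.mem_filter, Finset.mem_univ, true_and] at ha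
      obtain ⟨i, hi⟩ := ha
      obtain ⟨b, hb, hb2⟩ := h i
      have : a = b := Subtype.ext (hi.symm.trans hb2.symm)
      rw [this]; exact hb
  simp only [this]

lemma count_w (hm : 0 < m) (v : Fin m → Fin n) (T : Finset (Fin m)) :
    ((univ.filter (fun w : Fin m → Fin n => ∀ x ∈ T, ∃ y, v y = w x)).card : ℝ) ≤
      (m : ℝ) ^ m * (n : ℝ) ^ (m - T.card) := by
  have h1 : (univ.filter (fun w : Fin m → Fin n => ∀ x ∈ T, ∃ y, v y = w x)) =
      Fintype.piFinset (fun x => if x ∈ T then univ.image v else univ) := by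
    ext w
    simp only [Finset.mem_filter, Finset.mem_univ, true_and, Fintype.mem_piFinset]
    refine forall_congr' fun x => ?_
    split_ifs with h <;> simp [h]
  have h2 : (univ.filter (fun w : Fin m → Fin n => ∀ x ∈ T, ∃ y, v y = w x)).card ≤
      m ^ m * n ^ (m - T.card) := by
    rw [h1, Fintype.card_piFinset]
    calc _ ≤ ∏ x : Fin m, (if x ∈ T then m else n) := by
          refine Finset.prod_le_prod' fun x _ => ?_
          split_ifs
          · exact Finset.card_image_le.trans (by simp)
          · simp
      _ = m ^ T.card * n ^ (m - T.card) := by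
          rw [Finset.prod_ite]
          simp only [Finset.prod_const]
          congr 2
          · congr 1; ext; simp
          · have : univ.filter (fun x => x ∉ T) = Tᶜ := by ext; simp
            rw [this, Finset.card_compl, Fintype.card_fin]
      _ ≤ _ := by
          apply Nat.mul_le_mul_right
          apply Nat.pow_le_pow_right hm
          simpa using Finset.card_le_univ T
  exact_mod_cast h2

lemma del_bound (E : κ → Sym2 (Fin m)) (hE : Function.Injective E) (hm : 0 < m)
    (hd : ∀ i, ¬ (E i).IsDiag) (F : Finset (Fin m → Fin n)) (hF : ∀ v ∈ F, Function.Injective v)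
    {p M : ℝ} (h0 : 0 ≤ p) (hM : 0 < M)
    (hJ : ∀ J : Finset κ, J.Nonempty → M ≤ (n : ℝ) ^ (VJ E J).card * p ^ J.card) :
    Del p F (emb E) ≤ F.card * (2 ^ Fintype.card κ * (m : ℝ) ^ m * (n : ℝ) ^ m *
      p ^ (2 * Fintype.card κ) / M) := by
  unfold Del
  rw [← nsmul_eq_mul]
  refine Finset.sum_le_card_nsmul _ _ _ fun v hv => ?_
  set e := Fintype.card κ
  let c : Finset κ → (Fin m → Fin n) → ℝ := fun J w =>
    if ∀ x ∈ VJ E J, ∃ y, v y = w x then p ^ (2 * e - J.card) else 0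
  have hc0 : ∀ J w, 0 ≤ c J w := by
    intro J w; simp only [c]; split_ifs <;> positivity
  have hpt : ∀ w ∈ F.filter (fun w => ¬ Disjoint (emb E v) (emb E w)),
      p ^ (emb E v ∪ emb E w).card ≤ ∑ J ∈ univ.filter (fun J : Finset κ => J.Nonempty), c J w := by
    intro w hw
    obtain ⟨hwF, hnd⟩ := Finset.mem_filter.1 hw
    set J := univ.filter (fun i => ∃ j, (E j).map v = (E i).map w) with hJdef
    have hcard : (emb E v ∩ emb E w).card = J.card := emb_inter_card E hE hd (v := v) (hF w hwF)
    have hun := Finset.card_union_add_card_inter (emb E v) (emb E w)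
    rw [hcard, emb_card E hE hd (hF v hv), emb_card E hE hd (hF w hwF)] at hun
    have hne : J.Nonempty := by
      rw [← Finset.card_pos, ← hcard, Finset.card_pos]
      rwa [Finset.not_disjoint_iff_nonempty_inter] at hnd
    have hcJ : c J w = p ^ (emb E v ∪ emb E w).card := by
      have : ∀ x ∈ VJ E J, ∃ y, v y = w x := by
        intro x hx
        simp only [VJ, Finset.mem_filter, Finset.mem_univ, true_and] at hx
        obtain ⟨i, hi, hxi⟩ := hx
        simp only [hJdef, Finset.mem_filter, Finset.mem_univ, true_and] at hi
        obtain ⟨j, hj⟩ := hi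
        have : w x ∈ (E i).map w := Sym2.mem_map.2 ⟨x, hxi, rfl⟩
        rw [← hj] at this
        obtain ⟨y, _, hy⟩ := Sym2.mem_map.1 this
        exact ⟨y, hy⟩
      simp only [c]
      rw [if_pos this]
      congr 1
      omega
    rw [← hcJ]
    exact Finset.single_le_sum (f := fun J => c J w) (fun J _ => hc0 J w)
      (Finset.mem_filter.2 ⟨Finset.mem_univ J, hne⟩)
  calc _ ≤ ∑ w ∈ F.filter (fun w => ¬ Disjoint (emb E v) (emb E w)),
        ∑ J ∈ univ.filter (fun J : Finset κ => J.Nonempty), c J w := Finset.sum_le_sum hpt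
    _ ≤ ∑ w, ∑ J ∈ univ.filter (fun J : Finset κ => J.Nonempty), c J w :=
        Finset.sum_le_sum_of_subset_of_nonneg (Finset.subset_univ _)
          (fun w _ _ => Finset.sum_nonneg fun J _ => hc0 J w)
    _ = ∑ J ∈ univ.filter (fun J : Finset κ => J.Nonempty), ∑ w, c J w := Finset.sum_comm
    _ ≤ ∑ J ∈ univ.filter (fun J : Finset κ => J.Nonempty),
          ((m : ℝ) ^ m * (n : ℝ) ^ m * p ^ (2 * e) / M) := by
        refine Finset.sum_le_sum fun J hJm => ?_
        have hJne := (Finset.mem_filter.1 hJm).2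
        have hJe : J.card ≤ e := Finset.card_le_univ J
        have hVm : (VJ E J).card ≤ m := by simpa using Finset.card_le_univ (VJ E J)
        have e1 : ∑ w, c J w =
            ((univ.filter (fun w : Fin m → Fin n => ∀ x ∈ VJ E J, ∃ y, v y = w x)).card : ℝ)
              * p ^ (2 * e - J.card) := by
          simp only [c]
          rw [← Finset.sum_filter, Finset.sum_const, nsmul_eq_mul]
        rw [e1, le_div_iff₀ hM]
        have hx : (n : ℝ) ^ m * p ^ (2 * e) =
            ((n : ℝ) ^ (m - (VJ E J).card) * p ^ (2 * e - J.card)) *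
              ((n : ℝ) ^ (VJ E J).card * p ^ J.card) := by
          rw [mul_mul_mul_comm, ← pow_add, ← pow_add, Nat.sub_add_cancel hVm,
            Nat.sub_add_cancel (by omega)]
        rw [mul_assoc ((m : ℝ) ^ m), hx, ← mul_assoc, ← mul_assoc ((m : ℝ) ^ m)]
        have hw := count_w (n := n) hm v (VJ E J)
        have hp2 : 0 ≤ p ^ (2 * e - J.card) := by positivity
        exact mul_le_mul (mul_le_mul_of_nonneg_right hw hp2) (hJ J hJne) hM.le (by positivity)
    _ ≤ ((2 : ℝ) ^ e) * ((m : ℝ) ^ m * (n : ℝ) ^ m * p ^ (2 * e) / M) := by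
        rw [Finset.sum_const, nsmul_eq_mul]
        apply mul_le_mul_of_nonneg_right _ (by positivity)
        have : (univ.filter (fun J : Finset κ => J.Nonempty)).card ≤ 2 ^ e := by
          refine (Finset.card_le_univ _).trans ?_
          rw [Fintype.card_finset]
        exact_mod_cast this
    _ = _ := by ring

lemma mu_eq (E : κ → Sym2 (Fin m)) (hE : Function.Injective E)
    (hd : ∀ i, ¬ (E i).IsDiag) (F : Finset (Fin m → Fin n)) (hF : ∀ v ∈ F, Function.Injective v)
    (p : ℝ) : Mu p F (emb E) = F.card * p ^ Fintype.card κ := by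
  unfold Mu
  rw [← nsmul_eq_mul]
  exact Finset.sum_eq_card_nsmul fun v hv => by rw [emb_card E hE hd (hF v hv)]

lemma del_pos [Nonempty κ] (E : κ → Sym2 (Fin m)) (hE : Function.Injective E)
    (hd : ∀ i, ¬ (E i).IsDiag) (F : Finset (Fin m → Fin n)) (hF : ∀ v ∈ F, Function.Injective v)
    {p : ℝ} (hp : 0 < p) (hne : F.Nonempty) : 0 < Del p F (emb E) := by
  unfold Del
  refine Finset.sum_pos (fun v hv => Finset.sum_pos (fun w _ => by positivity) ⟨v, ?_⟩) hne
  refine Finset.mem_filter.2 ⟨hv, ?_⟩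
  rw [disjoint_self, Finset.bot_eq_empty, ← Finset.card_eq_zero, emb_card E hE hd (hF v hv)]
  exact Fintype.card_ne_zero

/-- lower tail for a fixed family -/
lemma lower_one [Nonempty κ] (E : κ → Sym2 (Fin m)) (hE : Function.Injective E) (hm : 0 < m)
    (hd : ∀ i, ¬ (E i).IsDiag) (F : Finset (Fin m → Fin n)) (hF : ∀ v ∈ F, Function.Injective v)
    {p M c : ℝ} (h0 : 0 < p) (h1 : p ≤ 1) (hM : 0 < M) (hn : 0 < n) (hc : 0 < c)
    (hcard : (c * n) ^ m ≤ (F.card : ℝ))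
    (hJ : ∀ J : Finset κ, J.Nonempty → M ≤ (n : ℝ) ^ (VJ E J).card * p ^ J.card) :
    erProb n p (fun G => (cnt E F G : ℝ) < 1 / 2 * p ^ Fintype.card κ * F.card) ≤
      Real.exp (-(c ^ m / (8 * 2 ^ Fintype.card κ * (m : ℝ) ^ m) * M)) := by
  have hn' : (0 : ℝ) < n := by exact_mod_cast hn
  have hm' : (0 : ℝ) < m := by exact_mod_cast hm
  have hFpos : (0 : ℝ) < F.card := lt_of_lt_of_le (by positivity) hcard
  have hne : F.Nonempty := by
    rw [← Finset.card_pos]; exact_mod_cast hFpos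
  have hmu := mu_eq E hE hd F hF p
  have hdel := del_pos E hE hd F hF h0 hne
  have hdb := del_bound E hE hm hd F hF h0.le hM hJ
  have hj := janson h0 h1 F (emb E) hdel (by rw [hmu]; positivity)
  rw [erProb_eq]
  refine le_trans (le_of_eq ?_) (hj.trans (Real.exp_le_exp.2 (neg_le_neg ?_)))
  · congr 1; funext S
    rw [XX_eq_cnt E hd F hF, hmu]
    have : 1 / 2 * p ^ Fintype.card κ * (F.card : ℝ) = 1 / 2 * (F.card * p ^ Fintype.card κ) := by
      ring
    simp only [this]
  · rw [le_div_iff₀ (by positivity), hmu]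
    set e := Fintype.card κ
    set N : ℝ := (F.card : ℝ)
    calc c ^ m / (8 * 2 ^ e * (m : ℝ) ^ m) * M * (8 * Del p F (emb E))
        ≤ c ^ m / (8 * 2 ^ e * (m : ℝ) ^ m) * M * (8 * (N * (2 ^ e * (m : ℝ) ^ m * (n : ℝ) ^ m *
      p ^ (2 * e) / M))) := by gcongr
      _ = ((c * n) ^ m) * (N * p ^ (2 * e)) := by rw [mul_pow]; field_simp
      _ ≤ N * (N * p ^ (2 * e)) := by gcongr
      _ = _ := by rw [mul_pow, ← pow_mul]; ring

lemma upper_one (E : κ → Sym2 (Fin m)) (hE : Function.Injective E) (hm : 0 < m)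
    (hd : ∀ i, ¬ (E i).IsDiag) (F : Finset (Fin m → Fin n)) (hF : ∀ v ∈ F, Function.Injective v)
    {p M : ℝ} (h0 : 0 < p) (h1 : p ≤ 1) (hM : 0 < M) (hn : 0 < n)
    (hcard : (F.card : ℝ) ≤ (n : ℝ) ^ m / 2)
    (hJ : ∀ J : Finset κ, J.Nonempty → M ≤ (n : ℝ) ^ (VJ E J).card * p ^ J.card) :
    erProb n p (fun G => p ^ Fintype.card κ * (n : ℝ) ^ m < (cnt E F G : ℝ)) ≤
      2 * 2 ^ Fintype.card κ * (m : ℝ) ^ m / M := by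
  have hn' : (0 : ℝ) < n := by exact_mod_cast hn
  have hm' : (0 : ℝ) < m := by exact_mod_cast hm
  have hmu := mu_eq E hE hd F hF p
  have hdb := del_bound E hE hm hd F hF h0.le hM hJ
  set e := Fintype.card κ
  set t : ℝ := p ^ e * (n : ℝ) ^ m / 2 with ht
  have htp : 0 < t := by positivity
  have hj := chebyshev h0.le h1 F (emb E) htp (by
    rw [hmu, ht]
    calc (F.card : ℝ) * p ^ e ≤ (n : ℝ) ^ m / 2 * p ^ e := by gcongr
      _ = _ := by ring)
  rw [erProb_eq]
  refine le_trans (le_of_eq ?_) (hj.trans ?_)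
  · congr 1; funext S
    rw [XX_eq_cnt E hd F hF]
    have : 2 * t = p ^ e * (n : ℝ) ^ m := by rw [ht]; ring
    simp only [this]
  · rw [div_le_iff₀ (by positivity)]
    calc Del p F (emb E) ≤ _ := hdb
      _ ≤ ((n : ℝ) ^ m / 2) * (2 ^ e * (m : ℝ) ^ m * (n : ℝ) ^ m * p ^ (2 * e) / M) := by gcongr
      _ = _ := by rw [ht, pow_mul]; field_simp; ring
end Pattern

/-! Part 3 : asymptotics. -/

lemma erProb_nonneg {n : ℕ} {p : ℝ} (h0 : 0 ≤ p) (h1 : p ≤ 1) (P : SimpleGraph (Fin n) → Prop) :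
    0 ≤ erProb n p P := by
  rw [erProb_eq]
  exact Ex_nonneg h0 h1 fun S => by split_ifs <;> norm_num

lemma erProb_mono {n : ℕ} {p : ℝ} (h0 : 0 ≤ p) (h1 : p ≤ 1) {P Q : SimpleGraph (Fin n) → Prop}
    (h : ∀ G, P G → Q G) : erProb n p P ≤ erProb n p Q := by
  rw [erProb_eq, erProb_eq]
  refine Ex_mono h0 h1 fun S => ?_
  by_cases hP : P (toG S)
  · simp [hP, h _ hP]
  · by_cases hQ : Q (toG S) <;> simp [hP, hQ]

lemma erProb_or {n : ℕ} {p : ℝ} (h0 : 0 ≤ p) (h1 : p ≤ 1) (P Q : SimpleGraph (Fin n) → Prop) :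
    erProb n p (fun G => P G ∨ Q G) ≤ erProb n p P + erProb n p Q := by
  rw [erProb_eq, erProb_eq, erProb_eq, ← Ex_add]
  refine Ex_mono h0 h1 fun S => ?_
  by_cases hP : P (toG S) <;> by_cases hQ : Q (toG S) <;> simp [hP, hQ]

lemma erProb_exists {n : ℕ} {p : ℝ} (h0 : 0 ≤ p) (h1 : p ≤ 1) {ι : Type*} (s : Finset ι)
    (P : ι → SimpleGraph (Fin n) → Prop) :
    erProb n p (fun G => ∃ i ∈ s, P i G) ≤ ∑ i ∈ s, erProb n p (P i) := by
  simp only [erProb_eq]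
  rw [← Ex_sum]
  refine Ex_mono h0 h1 fun S => ?_
  have hnn : ∀ j ∈ s, (0 : ℝ) ≤ if P j (toG S) then 1 else 0 := fun j _ => by
    split_ifs <;> norm_num
  split_ifs with h
  · obtain ⟨i, hi, hP⟩ := h
    have := Finset.single_le_sum hnn hi
    rw [if_pos hP] at this
    exact this
  · exact Finset.sum_nonneg hnn

lemma erProb_compl {n : ℕ} {p : ℝ} (P : SimpleGraph (Fin n) → Prop) :
    erProb n p P = 1 - erProb n p (fun G => ¬ P G) := by
  have h1 := Ex_one (α := Edg n) p
  have h2 : erProb n p P + erProb n p (fun G => ¬ P G) = Ex (α := Edg n) p (fun _ => 1) := by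
    rw [erProb_eq, erProb_eq, ← Ex_add]
    congr 1; funext S
    by_cases hP : P (toG S) <;> simp [hP]
  linarith

lemma pi_inj {m n : ℕ} (V : Fin m → Finset (Fin n)) (h : ∀ i j, i ≠ j → Disjoint (V i) (V j)) :
    ∀ v ∈ Fintype.piFinset V, Function.Injective v := by
  intro v hv i j hij
  by_contra hne
  rw [Fintype.mem_piFinset] at hv
  exact Finset.disjoint_left.1 (h i j hne) (hv i) (hij ▸ hv j)

section Aas
variable {κ : Type} [Fintype κ] [DecidableEq κ] {m : ℕ}

def badLow (E : κ → Sym2 (Fin m)) (c : ℝ) (n : ℕ) (p : ℝ) (G : SimpleGraph (Fin n)) : Prop :=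
  ∃ V : Fin m → Finset (Fin n), (∀ i j, i ≠ j → Disjoint (V i) (V j)) ∧
    (∀ i, c * n ≤ ((V i).card : ℝ)) ∧
    (cnt E (Fintype.piFinset V) G : ℝ) < 1 / 2 * p ^ Fintype.card κ * ∏ i, ((V i).card : ℝ)

lemma lower_aas [Nonempty κ] (E : κ → Sym2 (Fin m)) (hE : Function.Injective E) (hm : 0 < m)
    (hd : ∀ i, ¬ (E i).IsDiag) (p R : ℕ → ℝ) {c : ℝ} (hc : 0 < c)
    (hp0 : ∀ n, 0 ≤ p n) (hp1 : ∀ n, p n ≤ 1) (hpp : ∀ᶠ n in atTop, 0 < p n)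
    (hR : Tendsto R atTop atTop)
    (hJ : ∀ᶠ n : ℕ in atTop, ∀ J : Finset κ, J.Nonempty →
      n * R n ≤ (n : ℝ) ^ (VJ E J).card * p n ^ J.card) :
    Tendsto (fun n => erProb n (p n) (badLow E c n (p n))) atTop (nhds 0) := by
  set C : ℝ := c ^ m / (8 * 2 ^ Fintype.card κ * (m : ℝ) ^ m) with hC
  have hm' : (0 : ℝ) < m := by exact_mod_cast hm
  have hCp : 0 < C := by positivity
  have hlim : Tendsto (fun n : ℕ => Real.exp (-(n : ℝ))) atTop (nhds 0) :=
    Real.tendsto_exp_neg_atTop_nhds_zero.comp tendsto_natCast_atTop_atTop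
  refine squeeze_zero' (Eventually.of_forall fun n => erProb_nonneg (hp0 n) (hp1 n) _) ?_ hlim
  filter_upwards [hpp, hJ, eventually_gt_atTop 0, hR.eventually_ge_atTop 1,
    hR.eventually_ge_atTop ((m * Real.log 2 + 1) / C)] with n hpn hJn hn hR1 hRC
  have hn' : (0 : ℝ) < n := by exact_mod_cast hn
  have hM : 0 < n * R n := by positivity
  have hbound : ∀ V : Fin m → Finset (Fin n), erProb n (p n) (fun G =>
      (∀ i j, i ≠ j → Disjoint (V i) (V j)) ∧
      (∀ i, c * n ≤ ((V i).card : ℝ)) ∧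
      (cnt E (Fintype.piFinset V) G : ℝ) <
        1 / 2 * p n ^ Fintype.card κ * ∏ i, ((V i).card : ℝ)) ≤ Real.exp (-(C * (n * R n))) := by
    intro V
    by_cases h1 : ∀ i j, i ≠ j → Disjoint (V i) (V j)
    · by_cases h2 : ∀ i, c * n ≤ ((V i).card : ℝ)
      · have hcc : ((Fintype.piFinset V).card : ℝ) = ∏ i, ((V i).card : ℝ) := by
          rw [Fintype.card_piFinset]; push_cast; rfl
        have := lower_one E hE hm hd (Fintype.piFinset V) (pi_inj V h1) hpn (hp1 n) hM hn hc
          (by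
            rw [hcc]
            calc (c * n) ^ m = ∏ i : Fin m, (c * n) := by simp
              _ ≤ _ := Finset.prod_le_prod (fun i _ => by positivity) (fun i _ => h2 i)) hJn
        rw [hcc] at this
        exact (erProb_mono (hp0 n) (hp1 n) fun G hG => hG.2.2).trans this
      · have : ∀ G : SimpleGraph (Fin n), ((∀ i j, i ≠ j → Disjoint (V i) (V j)) ∧
          (∀ i, c * n ≤ ((V i).card : ℝ)) ∧
          (cnt E (Fintype.piFinset V) G : ℝ) <
            1 / 2 * p n ^ Fintype.card κ * ∏ i, ((V i).card : ℝ)) ↔ False := by tauto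
        simp only [this]
        rw [erProb_eq]; simp [Ex]; positivity
    · have : ∀ G : SimpleGraph (Fin n), ((∀ i j, i ≠ j → Disjoint (V i) (V j)) ∧
          (∀ i, c * n ≤ ((V i).card : ℝ)) ∧
          (cnt E (Fintype.piFinset V) G : ℝ) <
            1 / 2 * p n ^ Fintype.card κ * ∏ i, ((V i).card : ℝ)) ↔ False := by tauto
      simp only [this]
      rw [erProb_eq]; simp [Ex]; positivity
  calc erProb n (p n) (badLow E c n (p n)) ≤ _ :=
        erProb_mono (hp0 n) (hp1 n) (fun G hG => by
          obtain ⟨V, hV⟩ := hG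
          exact ⟨V, Finset.mem_univ V, hV⟩)
    _ ≤ _ := erProb_exists (hp0 n) (hp1 n) univ _
    _ ≤ ∑ V : Fin m → Finset (Fin n), Real.exp (-(C * (n * R n))) :=
        Finset.sum_le_sum fun V _ => hbound V
    _ = Real.exp (n * m * Real.log 2) * Real.exp (-(C * (n * R n))) := by
        rw [Finset.sum_const, nsmul_eq_mul, Finset.card_univ]
        congr 1
        rw [Fintype.card_fun, Fintype.card_finset, Fintype.card_fin, Fintype.card_fin]
        push_cast
        rw [← pow_mul, ← Nat.cast_mul, Real.exp_nat_mul, Real.exp_log (by norm_num)]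
    _ ≤ Real.exp (-(n : ℝ)) := by
        rw [← Real.exp_add]
        apply Real.exp_le_exp.2
        rw [div_le_iff₀ hCp] at hRC
        nlinarith

def badUp (E : κ → Sym2 (Fin m)) (a b : Fin m) (n : ℕ) (p : ℝ) (G : SimpleGraph (Fin n)) : Prop :=
  p ^ Fintype.card κ * (n : ℝ) ^ m <
    (cnt E (univ.filter fun v : Fin m → Fin n => Function.Injective v ∧ v a < v b) G : ℝ)

lemma half_card {m n : ℕ} (a b : Fin m) :
    ((univ.filter fun v : Fin m → Fin n => Function.Injective v ∧ v a < v b).card : ℝ) ≤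
      (n : ℝ) ^ m / 2 := by
  set F := univ.filter fun v : Fin m → Fin n => Function.Injective v ∧ v a < v b
  set F' := univ.filter fun v : Fin m → Fin n => v b < v a
  have h1 : F.card ≤ F'.card := by
    refine Finset.card_le_card_of_injOn (fun v => v ∘ Equiv.swap a b) ?_ ?_
    · intro v hv
      have hv := (Finset.mem_filter.1 hv).2.2
      exact Finset.mem_filter.2 ⟨Finset.mem_univ _, by simpa using hv⟩
    · intro v _ w _ h
      exact (Equiv.swap a b).surjective.injective_comp_right h
  have h2 : Disjoint F F' := by
    rw [Finset.disjoint_left]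
    intro v hv hv'
    exact lt_asymm (Finset.mem_filter.1 hv).2.2 (Finset.mem_filter.1 hv').2
  have h3 : (F ∪ F').card ≤ n ^ m := by
    refine (Finset.card_le_univ _).trans ?_
    simp
  rw [Finset.card_union_of_disjoint h2] at h3
  have : F.card * 2 ≤ n ^ m := by omega
  rw [le_div_iff₀ (by norm_num)]
  exact_mod_cast this

lemma upper_aas (E : κ → Sym2 (Fin m)) (hE : Function.Injective E) (hm : 0 < m)
    (hd : ∀ i, ¬ (E i).IsDiag) (a b : Fin m) (p R : ℕ → ℝ)
    (hp0 : ∀ n, 0 ≤ p n) (hp1 : ∀ n, p n ≤ 1) (hpp : ∀ᶠ n in atTop, 0 < p n)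
    (hR : Tendsto R atTop atTop)
    (hJ : ∀ᶠ n : ℕ in atTop, ∀ J : Finset κ, J.Nonempty →
      R n ≤ (n : ℝ) ^ (VJ E J).card * p n ^ J.card) :
    Tendsto (fun n => erProb n (p n) (badUp E a b n (p n))) atTop (nhds 0) := by
  have hlim : Tendsto (fun n : ℕ => 2 * 2 ^ Fintype.card κ * (m : ℝ) ^ m / R n) atTop (nhds 0) :=
    hR.const_div_atTop _
  refine squeeze_zero' (Eventually.of_forall fun n => erProb_nonneg (hp0 n) (hp1 n) _) ?_ hlim
  filter_upwards [hpp, hJ, eventually_gt_atTop 0, hR.eventually_ge_atTop 1] with n hpn hJn hn hR1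
  exact upper_one E hE hm hd _ (fun v hv => (Finset.mem_filter.1 hv).2.1) hpn (hp1 n)
    (by linarith) hn (half_card a b) hJn
end Aas

/-! Patterns. -/

def starP (r : ℕ) : Fin r → Sym2 (Fin (r + 1)) := fun i => s(0, i.succ)

lemma starP_inj (r : ℕ) : Function.Injective (starP r) := by
  intro i j h
  simpa [starP] using h

lemma starP_nd (r : ℕ) (i : Fin r) : ¬ (starP r i).IsDiag := by
  simp [starP, Sym2.mk_isDiag_iff]
  exact (Fin.succ_ne_zero i).symm

lemma starP_VJ (r : ℕ) (J : Finset (Fin r)) (hJ : J.Nonempty) :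
    J.card + 1 ≤ (VJ (starP r) J).card := by
  have h1 : (insert 0 (J.image Fin.succ)).card = J.card + 1 := by
    rw [Finset.card_insert_of_notMem, Finset.card_image_of_injective _ (Fin.succ_injective r)]
    simp [Fin.succ_ne_zero]
  rw [← h1]
  apply Finset.card_le_card
  intro x hx
  simp only [VJ, Finset.mem_filter, Finset.mem_univ, true_and]
  rcases Finset.mem_insert.1 hx with rfl | hx
  · obtain ⟨i, hi⟩ := hJ
    exact ⟨i, hi, by simp [starP]⟩
  · obtain ⟨i, hi, rfl⟩ := Finset.mem_image.1 hx
    exact ⟨i, hi, by simp [starP]⟩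

def nxt {k : ℕ} (i : Fin k) : Fin k := i + ⟨1 % k, Nat.mod_lt 1 i.pos⟩

lemma nxt_val {k : ℕ} (hk : 3 ≤ k) (i : Fin k) : (nxt i).val = if i.val + 1 = k then 0 else i.val + 1 := by
  unfold nxt
  rw [Fin.val_add]
  simp only [Nat.mod_eq_of_lt (show 1 < k by omega)]
  have := i.2
  split_ifs with h
  · rw [h]; simp
  · exact Nat.mod_eq_of_lt (by omega)

def cyc (k : ℕ) : Fin k → Sym2 (Fin k) := fun i => s(i, nxt i)

lemma nxt_inj {k : ℕ} (hk : 3 ≤ k) : Function.Injective (nxt (k := k)) := by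
  intro i j h
  have h := congrArg Fin.val h
  rw [nxt_val hk, nxt_val hk] at h
  have := i.2
  have := j.2
  apply Fin.ext
  split_ifs at h <;> omega

lemma cyc_inj {k : ℕ} (hk : 3 ≤ k) : Function.Injective (cyc k) := by
  intro i j h
  simp only [cyc, Sym2.eq_iff] at h
  rcases h with h | ⟨h1, h2⟩
  · exact h.1
  · exfalso
    have h1 := congrArg Fin.val h1
    have h2 := congrArg Fin.val h2
    rw [nxt_val hk] at h1 h2
    have := i.2
    have := j.2
    split_ifs at h1 h2 <;> omega

lemma cyc_nd {k : ℕ} (hk : 3 ≤ k) (i : Fin k) : ¬ (cyc k i).IsDiag := by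
  simp only [cyc, Sym2.mk_isDiag_iff]
  intro h
  have h := congrArg Fin.val h
  rw [nxt_val hk] at h
  split_ifs at h <;> omega

lemma closed_univ {k : ℕ} (hk : 3 ≤ k) (J : Finset (Fin k)) (hJ : J.Nonempty)
    (h : ∀ i ∈ J, nxt i ∈ J) : J = univ := by
  obtain ⟨i0, hi0⟩ := hJ
  have step : ∀ (d : ℕ), ∀ i ∈ J, ∀ hd : i.val + d < k, (⟨i.val + d, hd⟩ : Fin k) ∈ J := by
    intro d
    induction d with
    | zero => intro i hi _; exact hi
    | succ d ih =>
      intro i hi hd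
      have h1 := h _ (ih i hi (by omega))
      convert h1 using 1
      apply Fin.ext
      rw [nxt_val hk]
      simp only
      split_ifs with h2 <;> omega
  have hlast := h _ (step (k - 1 - i0.val) i0 hi0 (by have := i0.2; omega))
  have hz : (⟨0, by omega⟩ : Fin k) ∈ J := by
    convert hlast using 1
    apply Fin.ext
    rw [nxt_val hk]
    simp only
    have := i0.2
    split_ifs with h2 <;> omega
  ext x
  simp only [Finset.mem_univ, iff_true]
  have := step x.val _ hz (by simp)
  simpa using this

lemma cyc_VJ {k : ℕ} (hk : 3 ≤ k) (J : Finset (Fin k)) (hJ : J.Nonempty) :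
    J.card + 1 ≤ (VJ (cyc k) J).card ∨ (J.card = k ∧ (VJ (cyc k) J).card = k) := by
  have hsub : J ⊆ VJ (cyc k) J := by
    intro i hi
    simp only [VJ, Finset.mem_filter, Finset.mem_univ, true_and]
    exact ⟨i, hi, by simp [cyc]⟩
  by_cases h : J.card + 1 ≤ (VJ (cyc k) J).card
  · exact Or.inl h
  · right
    have heq : J = VJ (cyc k) J := Finset.eq_of_subset_of_card_le hsub (by omega)
    have hu : J = univ := by
      apply closed_univ hk J hJ
      intro i hi
      rw [heq]
      simp only [VJ, Finset.mem_filter, Finset.mem_univ, true_and]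
      exact ⟨i, hi, by simp [cyc]⟩
    rw [← heq, hu]; simp

lemma crit {n : ℕ} {p R : ℝ} (hn : 0 < n) (hp : 0 ≤ p) (hR : R ≤ n * p) (hW : 1 ≤ n * p)
    {a b : ℕ} (ha : 0 < a) (hab : a + 1 ≤ b) : n * R ≤ (n : ℝ) ^ b * p ^ a := by
  have hn' : (1 : ℝ) ≤ n := by exact_mod_cast hn
  calc n * R ≤ n * (n * p) := by gcongr
    _ ≤ n * (n * p) ^ a := by
        gcongr
        exact le_self_pow₀ hW (by omega)
    _ = (n : ℝ) ^ (a + 1) * p ^ a := by rw [mul_pow]; ring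
    _ ≤ _ := by gcongr

/-! Part 4 : assembling. -/

lemma crit_facts (ℓ₀ ℓ : ℕ) (hℓ : 3 ≤ ℓ) {n : ℕ} (hn : 0 < n) {p : ℝ} (hp0 : 0 ≤ p) :
    p / pCrit ℓ₀ ℓ n ≤ n * p ∧
      (ℓ < ℓ₀ → n * (p / pCrit ℓ₀ ℓ n) ^ ℓ = (n * p) ^ ℓ) := by
  have hn' : (0 : ℝ) < n := by exact_mod_cast hn
  have hn1 : (1 : ℝ) ≤ n := by exact_mod_cast hn
  have hl : (0 : ℝ) < ℓ := by exact_mod_cast (show 0 < ℓ by omega)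
  unfold pCrit
  by_cases h : ℓ < ℓ₀
  · rw [if_pos h, Real.rpow_neg hn'.le, div_inv_eq_mul]
    refine ⟨?_, fun _ => ?_⟩
    · rw [mul_comm]
      refine mul_le_mul_of_nonneg_right ?_ hp0
      calc (n : ℝ) ^ (((ℓ : ℝ) - 1) / ℓ) ≤ (n : ℝ) ^ (1 : ℝ) := by
            apply Real.rpow_le_rpow_of_exponent_le hn1
            rw [div_le_one hl]; linarith
        _ = n := Real.rpow_one _
    · rw [mul_pow, mul_pow]
      have : ((n : ℝ) ^ (((ℓ : ℝ) - 1) / ℓ)) ^ ℓ = (n : ℝ) ^ (ℓ - 1) := by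
        rw [← Real.rpow_natCast, ← Real.rpow_mul hn'.le, div_mul_cancel₀ _ hl.ne',
          ← Real.rpow_natCast]
        rw [Nat.cast_sub (by omega)]; simp
      rw [this]
      obtain ⟨d, rfl⟩ : ∃ d, ℓ = d + 1 := ⟨ℓ - 1, by omega⟩
      simp only [Nat.add_sub_cancel]
      ring
  · rw [if_neg h, div_inv_eq_mul]
    exact ⟨by rw [mul_comm], fun h' => absurd h' h⟩

lemma A1_conv {n ℓ₀ : ℕ} {p : ℝ} {G : SimpleGraph (Fin n)}
    (h : ¬ badLow (starP 1) (1 / (ℓ₀ : ℝ)) n p G) (V₁ V₂ : Finset (Fin n)) (hd : Disjoint V₁ V₂)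
    (h1 : (n : ℝ) / ℓ₀ ≤ (V₁.card : ℝ)) (h2 : (n : ℝ) / ℓ₀ ≤ (V₂.card : ℝ)) :
    p / 2 * V₁.card * V₂.card ≤ (edgesBetween G V₁ V₂ : ℝ) := by
  by_contra hlt
  push Not at hlt
  apply h
  refine ⟨![V₁, V₂], ?_, ?_, ?_⟩
  · intro i j hij
    fin_cases i <;> fin_cases j <;> simp_all [disjoint_comm]
  · intro i
    rw [one_div_mul_eq_div]
    fin_cases i <;> simpa
  · have hc : cnt (starP 1) (Fintype.piFinset ![V₁, V₂]) G ≤ edgesBetween G V₁ V₂ := by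
      unfold cnt edgesBetween
      refine Finset.card_le_card_of_injOn (fun v => (v 0, v 1)) ?_ ?_
      · intro v hv
        obtain ⟨hv1, hv2⟩ := mem_cntS.1 hv
        rw [Fintype.mem_piFinset] at hv1
        have a0 := hv1 0
        have a1 := hv1 1
        have b := hv2 0
        simp only [starP, Sym2.map_mk, SimpleGraph.mem_edgeSet] at b
        simp at a0 a1
        exact Finset.mem_filter.2 ⟨Finset.mem_product.2 ⟨a0, a1⟩, b⟩
      · intro v _ w _ hvw
        simp only [Prod.mk.injEq] at hvw
        funext i
        fin_cases i
        · exact hvw.1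
        · exact hvw.2
    have hc' : (cnt (starP 1) (Fintype.piFinset ![V₁, V₂]) G : ℝ) ≤ edgesBetween G V₁ V₂ := by
      exact_mod_cast hc
    rw [Fin.prod_univ_two]
    simp only [Fintype.card_fin, Matrix.cons_val_zero, Matrix.cons_val_one]
    refine lt_of_le_of_lt hc' (lt_of_lt_of_le hlt (le_of_eq ?_))
    ring

lemma A2_conv {n ℓ₀ : ℕ} {p : ℝ} {G : SimpleGraph (Fin n)}
    (h : ¬ badLow (starP 2) (1 / (ℓ₀ : ℝ)) n p G) (V₁ V₂ V₃ : Finset (Fin n))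
    (hd : Disjoint V₁ V₂) (hd2 : Disjoint V₁ V₃) (hd3 : Disjoint V₂ V₃)
    (h1 : (n : ℝ) / ℓ₀ ≤ (V₁.card : ℝ)) (h2 : (n : ℝ) / ℓ₀ ≤ (V₂.card : ℝ))
    (h3 : (n : ℝ) / ℓ₀ ≤ (V₃.card : ℝ)) :
    p ^ 2 / 4 * V₁.card * V₂.card * V₃.card ≤ (cherriesBetween G V₁ V₂ V₃ : ℝ) := by
  by_contra hlt
  push Not at hlt
  apply h
  refine ⟨![V₁, V₂, V₃], ?_, ?_, ?_⟩
  · intro i j hij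
    fin_cases i <;> fin_cases j <;> simp_all [disjoint_comm]
  · intro i
    rw [one_div_mul_eq_div]
    fin_cases i <;> simpa
  · have hc : cnt (starP 2) (Fintype.piFinset ![V₁, V₂, V₃]) G ≤ cherriesBetween G V₁ V₂ V₃ := by
      unfold cnt cherriesBetween
      refine Finset.card_le_card_of_injOn (fun v => (v 0, v 1, v 2)) ?_ ?_
      · intro v hv
        obtain ⟨hv1, hv2⟩ := mem_cntS.1 hv
        rw [Fintype.mem_piFinset] at hv1
        have a0 := hv1 0
        have a1 := hv1 1
        have a2 := hv1 2
        have b := hv2 0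
        have b' := hv2 1
        simp only [starP, Sym2.map_mk, SimpleGraph.mem_edgeSet] at b b'
        simp at a0 a1 a2
        exact Finset.mem_filter.2
          ⟨Finset.mem_product.2 ⟨a0, Finset.mem_product.2 ⟨a1, a2⟩⟩, b, b'⟩
      · intro v _ w _ hvw
        simp only [Prod.mk.injEq] at hvw
        funext i
        fin_cases i
        · exact hvw.1
        · exact hvw.2.1
        · exact hvw.2.2
    have hc' : (cnt (starP 2) (Fintype.piFinset ![V₁, V₂, V₃]) G : ℝ) ≤
        cherriesBetween G V₁ V₂ V₃ := by
      exact_mod_cast hc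
    rw [Fin.prod_univ_three]
    simp only [Fintype.card_fin, Matrix.cons_val_zero, Matrix.cons_val_one, Matrix.cons_val]
    refine lt_of_le_of_lt hc' (lt_of_lt_of_le hlt ?_)
    have : 0 ≤ p ^ 2 * ((V₁.card : ℝ) * V₂.card * V₃.card) := by positivity
    linarith

lemma A3_conv {n ℓ₀ k : ℕ} {p : ℝ} {G : SimpleGraph (Fin n)}
    (h : ¬ badLow (cyc k) (1 / (ℓ₀ : ℝ) ^ 2) n p G) (V : Fin k → Finset (Fin n))
    (hd : ∀ i j, i ≠ j → Disjoint (V i) (V j))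
    (h1 : ∀ i, (n : ℝ) / (ℓ₀ : ℝ) ^ 2 ≤ ((V i).card : ℝ)) :
    1 / 2 * p ^ k * ∏ i, ((V i).card : ℝ) ≤ (cyclesBetween G k V : ℝ) := by
  by_contra hlt
  push Not at hlt
  apply h
  refine ⟨V, hd, ?_, ?_⟩
  · intro i
    rw [one_div_mul_eq_div]
    exact h1 i
  · have hc : cnt (cyc k) (Fintype.piFinset V) G = cyclesBetween G k V := by
      unfold cnt cyclesBetween
      congr 1
      ext v
      simp only [mem_cntS, Finset.mem_filter, Fintype.mem_piFinset, Finset.mem_univ, true_and, cyc,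
        Sym2.map_mk, SimpleGraph.mem_edgeSet, nxt]
    rw [hc, Fintype.card_fin]
    exact hlt

lemma cherry_conv {n : ℕ} {p : ℝ} {G : SimpleGraph (Fin n)}
    (h : ¬ badUp (starP 2) 1 2 n p G) : (cherryCount G : ℝ) ≤ p ^ 2 * (n : ℝ) ^ 3 := by
  unfold badUp at h
  push Not at h
  simp only [Fintype.card_fin] at h
  refine le_trans ?_ h
  norm_cast
  unfold cherryCount cnt
  refine Finset.card_le_card_of_injOn (fun e => ![e.1, e.2.1, e.2.2]) ?_ ?_
  · rintro ⟨a, b, c⟩ he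
    obtain ⟨h1, h2, h3⟩ := (Finset.mem_filter.1 he).2
    simp only at h1 h2 h3
    have n1 := h1.ne
    have n2 := h2.ne
    have n3 := h3.ne
    refine mem_cntS.2 ⟨Finset.mem_filter.2 ⟨Finset.mem_univ _, ?_, ?_⟩, ?_⟩
    · intro i j hij
      fin_cases i <;> fin_cases j <;> simp_all [eq_comm]
    · simpa using h3
    · intro i
      fin_cases i
      · simpa [starP] using h1
      · simpa [starP] using h2
  · rintro ⟨a, b, c⟩ _ ⟨a', b', c'⟩ _ h
    have e0 := congrFun h 0
    have e1 := congrFun h 1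
    have e2 := congrFun h 2
    simp at e0 e1 e2
    simp [e0, e1, e2]

lemma tri_conv {n : ℕ} {p : ℝ} {G : SimpleGraph (Fin n)}
    (h : ¬ badUp (cyc 3) 0 1 n p G) : (triangleCount G : ℝ) ≤ p ^ 3 * (n : ℝ) ^ 3 := by
  unfold badUp at h
  push Not at h
  simp only [Fintype.card_fin] at h
  refine le_trans ?_ h
  norm_cast
  unfold triangleCount cnt
  refine Finset.card_le_card_of_injOn (fun e => ![e.1, e.2.1, e.2.2]) ?_ ?_
  · rintro ⟨a, b, c⟩ he
    obtain ⟨h4, h5, h1, h2, h3⟩ := (Finset.mem_filter.1 he).2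
    simp only at h1 h2 h3 h4 h5
    have n1 := h1.ne
    have n2 := h2.ne
    have n3 := h3.ne
    refine mem_cntS.2 ⟨Finset.mem_filter.2 ⟨Finset.mem_univ _, ?_, ?_⟩, ?_⟩
    · intro i j hij
      fin_cases i <;> fin_cases j <;> simp_all [eq_comm]
    · simpa using h4
    · intro i
      fin_cases i
      · exact h1
      · exact h3
      · exact h2.symm
  · rintro ⟨a, b, c⟩ _ ⟨a', b', c'⟩ _ h
    have e0 := congrFun h 0
    have e1 := congrFun h 1
    have e2 := congrFun h 2
    simp at e0 e1 e2
    simp [e0, e1, e2]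

lemma c4_conv {n : ℕ} {p : ℝ} {G : SimpleGraph (Fin n)}
    (h : ¬ badUp (cyc 4) 1 3 n p G) : (c4Count G : ℝ) ≤ p ^ 4 * (n : ℝ) ^ 4 := by
  unfold badUp at h
  push Not at h
  simp only [Fintype.card_fin] at h
  refine le_trans ?_ h
  norm_cast
  unfold c4Count cnt
  refine Finset.card_le_card_of_injOn (fun e => ![e.1, e.2.1, e.2.2.1, e.2.2.2]) ?_ ?_
  · rintro ⟨a, b, c, d⟩ he
    obtain ⟨h1, h2, h3, h4, h5, h6, h7, h8⟩ := (Finset.mem_filter.1 he).2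
    simp only at h1 h2 h3 h4 h5 h6 h7 h8
    have n1 := h1.ne
    have n2 := h2.ne
    have n3 := h3.ne
    have n4 := h6.ne
    have n5 := h7.ne
    have n6 := h8.ne
    refine mem_cntS.2 ⟨Finset.mem_filter.2 ⟨Finset.mem_univ _, ?_, ?_⟩, ?_⟩
    · intro i j hij
      fin_cases i <;> fin_cases j <;> simp_all [eq_comm]
    · exact h8
    · intro i
      fin_cases i
      · exact h1
      · exact h2
      · exact h3
      · exact h4
  · rintro ⟨a, b, c, d⟩ _ ⟨a', b', c', d'⟩ _ h
    have e0 := congrFun h 0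
    have e1 := congrFun h 1
    have e2 := congrFun h 2
    have e3 := congrFun h 3
    simp at e0 e1 e2 e3
    simp [e0, e1, e2, e3]

/-- For integers `ℓ₀ > 0`, `ℓ ≥ 3` and `p = ω(p_{ℓ₀,ℓ}(n))`, a.a.s. the random graph
`G(n,p)` is an `(n, p, ℓ₀, ℓ)`-graph. -/
theorem aas_isABGraph (ℓ₀ ℓ : ℕ) (hℓ₀ : 0 < ℓ₀) (hℓ : 3 ≤ ℓ) (p : ℕ → ℝ)
    (hp0 : ∀ n, 0 ≤ p n) (hp1 : ∀ n, p n ≤ 1)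
    (hp : Tendsto (fun n : ℕ => p n / pCrit ℓ₀ ℓ n) atTop atTop) :
    Tendsto (fun n : ℕ => erProb n (p n) (IsABGraph n (p n) ℓ₀ ℓ)) atTop (nhds 1) := by
  set R : ℕ → ℝ := fun n => p n / pCrit ℓ₀ ℓ n with hRdef
  have hev : ∀ᶠ n : ℕ in atTop, 0 < n ∧ 0 < p n ∧ 1 ≤ R n ∧ R n ≤ n * p n ∧
      (ℓ < ℓ₀ → n * R n ^ ℓ = (n * p n) ^ ℓ) := by
    filter_upwards [eventually_gt_atTop 0, hp.eventually_ge_atTop 1] with n hn hR1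
    have hf := crit_facts ℓ₀ ℓ hℓ hn (hp0 n)
    refine ⟨hn, ?_, hR1, hf.1, hf.2⟩
    rcases (hp0 n).eq_or_lt with h | h
    · exfalso
      simp only [hRdef] at hR1
      rw [← h] at hR1
      norm_num at hR1
    · exact h
  have hpp : ∀ᶠ n in atTop, 0 < p n := hev.mono fun n h => h.2.1
  have hL : (0 : ℝ) < ℓ₀ := by exact_mod_cast hℓ₀
  have hstar : ∀ r : ℕ, ∀ᶠ n : ℕ in atTop, ∀ J : Finset (Fin r), J.Nonempty →
      n * R n ≤ (n : ℝ) ^ (VJ (starP r) J).card * p n ^ J.card := by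
    intro r
    filter_upwards [hev] with n ⟨hn, hpn, hR1, hRW, _⟩ J hJ
    exact crit hn hpn.le hRW (hR1.trans hRW) (Finset.card_pos.2 hJ) (starP_VJ r J hJ)
  have hweak : ∀ (n : ℕ) (x : ℝ), 0 < n → 1 ≤ R n → n * R n ≤ x → R n ≤ x := by
    intro n x hn hR1 hx
    have : (1 : ℝ) ≤ n := by exact_mod_cast hn
    nlinarith
  have hcycW : ∀ k : ℕ, 3 ≤ k → ∀ᶠ n : ℕ in atTop, ∀ J : Finset (Fin k), J.Nonempty →
      R n ≤ (n : ℝ) ^ (VJ (cyc k) J).card * p n ^ J.card := by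
    intro k hk
    filter_upwards [hev] with n ⟨hn, hpn, hR1, hRW, _⟩ J hJ
    rcases cyc_VJ hk J hJ with h | ⟨h1, h2⟩
    · exact hweak n _ hn hR1 (crit hn hpn.le hRW (hR1.trans hRW) (Finset.card_pos.2 hJ) h)
    · rw [h1, h2, ← mul_pow]
      exact hRW.trans (le_self_pow₀ (hR1.trans hRW) (by omega))
  have hcycS : ∀ k : ℕ, ℓ ≤ k → k < ℓ₀ → ∀ᶠ n : ℕ in atTop, ∀ J : Finset (Fin k), J.Nonempty →
      n * R n ≤ (n : ℝ) ^ (VJ (cyc k) J).card * p n ^ J.card := by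
    intro k hk hk0
    filter_upwards [hev] with n ⟨hn, hpn, hR1, hRW, hRl⟩ J hJ
    rcases cyc_VJ (hℓ.trans hk) J hJ with h | ⟨h1, h2⟩
    · exact crit hn hpn.le hRW (hR1.trans hRW) (Finset.card_pos.2 hJ) h
    · rw [h1, h2, ← mul_pow]
      calc n * R n ≤ n * R n ^ ℓ := by
            gcongr
            exact le_self_pow₀ hR1 (by omega)
        _ = (n * p n) ^ ℓ := hRl (by omega)
        _ ≤ _ := pow_le_pow_right₀ (hR1.trans hRW) hk
  have t1 := lower_aas (starP 1) (starP_inj 1) (by norm_num) (starP_nd 1) p R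
    (c := 1 / (ℓ₀ : ℝ)) (by positivity) hp0 hp1 hpp hp (hstar 1)
  have t2 := lower_aas (starP 2) (starP_inj 2) (by norm_num) (starP_nd 2) p R
    (c := 1 / (ℓ₀ : ℝ)) (by positivity) hp0 hp1 hpp hp (hstar 2)
  have t3 := upper_aas (starP 2) (starP_inj 2) (by norm_num) (starP_nd 2) 1 2 p R
    hp0 hp1 hpp hp (by
      filter_upwards [hev, hstar 2] with n hn h J hJ
      exact hweak n _ hn.1 hn.2.2.1 (h J hJ))
  have t4 := upper_aas (cyc 3) (cyc_inj le_rfl) (by norm_num) (cyc_nd le_rfl) 0 1 p R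
    hp0 hp1 hpp hp (hcycW 3 le_rfl)
  have t5 := upper_aas (cyc 4) (cyc_inj (by norm_num)) (by norm_num) (cyc_nd (by norm_num)) 1 3 p R
    hp0 hp1 hpp hp (hcycW 4 (by norm_num))
  have t6 : Tendsto (fun n => ∑ k ∈ Finset.Ico ℓ ℓ₀,
      erProb n (p n) (badLow (cyc k) (1 / (ℓ₀ : ℝ) ^ 2) n (p n))) atTop (nhds 0) := by
    rw [show (0 : ℝ) = ∑ k ∈ Finset.Ico ℓ ℓ₀, 0 by simp]
    refine tendsto_finsetSum _ fun k hk => ?_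
    obtain ⟨hk1, hk2⟩ := Finset.mem_Ico.1 hk
    have hk3 : 3 ≤ k := hℓ.trans hk1
    have : Nonempty (Fin k) := ⟨⟨0, by omega⟩⟩
    exact lower_aas (cyc k) (cyc_inj hk3) (by omega) (cyc_nd hk3) p R
      (by positivity) hp0 hp1 hpp hp (hcycS k hk1 hk2)
  have tot := ((((t1.add t2).add t3).add t4).add t5).add t6
  simp only [add_zero] at tot
  have hbad : Tendsto (fun n => erProb n (p n) (fun G => ¬ IsABGraph n (p n) ℓ₀ ℓ G)) atTop
      (nhds 0) := by
    refine squeeze_zero (fun n => erProb_nonneg (hp0 n) (hp1 n) _) (fun n => ?_) tot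
    have a0 := hp0 n
    have a1 := hp1 n
    refine le_trans (erProb_mono a0 a1 (Q := fun G => ((((badLow (starP 1) (1 / (ℓ₀ : ℝ)) n (p n) G ∨
      badLow (starP 2) (1 / (ℓ₀ : ℝ)) n (p n) G) ∨ badUp (starP 2) 1 2 n (p n) G) ∨
      badUp (cyc 3) 0 1 n (p n) G) ∨ badUp (cyc 4) 1 3 n (p n) G) ∨
      ∃ k ∈ Finset.Ico ℓ ℓ₀, badLow (cyc k) (1 / (ℓ₀ : ℝ) ^ 2) n (p n) G) ?_) ?_
    · intro G hG
      by_contra hcon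
      push Not at hcon
      obtain ⟨⟨⟨⟨⟨c1, c2⟩, c3⟩, c4⟩, c5⟩, c6⟩ := hcon
      apply hG
      refine ⟨fun V₁ V₂ => A1_conv c1 V₁ V₂, ⟨fun V₁ V₂ V₃ => A2_conv c2 V₁ V₂ V₃,
        cherry_conv c3⟩, fun k hk1 hk2 V => A3_conv (c6 k (Finset.mem_Ico.2 ⟨hk1, hk2⟩)) V,
        tri_conv c4, c4_conv c5⟩
    · refine (erProb_or a0 a1 _ _).trans (add_le_add ?_ (erProb_exists a0 a1 _ _))
      refine (erProb_or a0 a1 _ _).trans (add_le_add ?_ le_rfl)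
      refine (erProb_or a0 a1 _ _).trans (add_le_add ?_ le_rfl)
      refine (erProb_or a0 a1 _ _).trans (add_le_add ?_ le_rfl)
      exact erProb_or a0 a1 _ _
  have := hbad.const_sub 1
  rw [sub_zero] at this
  exact this.congr fun n => (erProb_compl _).symm
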